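/- arXiv:2604.03615 — 2 statements merged into one kernel-verified Lean document; each statement's English description precedes it below -/
import Mathlib

section
/- Let n ≥ 2 and let L be the Laplacian matrix of the directed path P⃗_n. Then the trace norm of L satisfies ‖L‖_* = Σ_{j=0}^{n−1} 2·sin(πj/(2n)) = cot(π/(4n)) − 1. -/
open Matrix

/-- The multiset of singular values of a real square matrix `M`: the nonnegative
square roots of the eigenvalues of `M * Mᵀ` (the roots of its characteristic
polynomial, counted with multiplicity). -/
noncomputable def singularValues {m : Type*} [Fintype m] [DecidableEq m]
    (M : Matrix m m ℝ) : Multiset ℝ :=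
  ((M * Mᵀ).charpoly.roots).map Real.sqrt

/-- The trace norm of a real square matrix: the sum of its singular values. -/
noncomputable def traceNorm {m : Type*} [Fintype m] [DecidableEq m]
    (M : Matrix m m ℝ) : ℝ :=
  (singularValues M).sum

/-- Adjacency matrix of the directed cycle C⃗_n: entry (i,j) is 1 iff j ≡ i+1 (mod n). -/
def cycleAdj (n : ℕ) : Matrix (Fin n) (Fin n) ℝ :=
  fun i j => if (j : ℕ) = ((i : ℕ) + 1) % n then 1 else 0

/-- Adjacency matrix of the directed path P⃗_n: entry (i,j) is 1 iff j = i+1. -/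
def pathAdj (n : ℕ) : Matrix (Fin n) (Fin n) ℝ :=
  fun i j => if (j : ℕ) = (i : ℕ) + 1 then 1 else 0

/-- The outdegree matrix of a digraph with adjacency matrix `A`: the diagonal
matrix of row sums of `A`. -/
noncomputable def outDeg {m : Type*} [Fintype m] [DecidableEq m]
    (A : Matrix m m ℝ) : Matrix m m ℝ :=
  Matrix.diagonal (fun i => ∑ j, A i j)

/-- Adjacency matrix of the oriented star S⃗_n(x,y) on n = x+y+1 vertices:
vertex 0 is the center, vertices 1..x are the out-neighbours of the center and
vertices x+1..x+y are its in-neighbours. -/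
def starAdj (x y : ℕ) : Matrix (Fin (x + y + 1)) (Fin (x + y + 1)) ℝ :=
  fun i j =>
    if (i : ℕ) = 0 ∧ 1 ≤ (j : ℕ) ∧ (j : ℕ) ≤ x then 1
    else if (j : ℕ) = 0 ∧ x + 1 ≤ (i : ℕ) then 1 else 0

/-- Adjacency matrix of the out-star S⃗_n(n-1,0): vertex 0 is the center with
arcs to all other vertices, and there are no other arcs. -/
def outStarAdj (n : ℕ) : Matrix (Fin n) (Fin n) ℝ :=
  fun i j => if (i : ℕ) = 0 ∧ (j : ℕ) ≠ 0 then 1 else 0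

/-- Adjacency matrix of the disjoint union C⃗_{n-1} ∪ K₁: a directed (n-1)-cycle
on the first n-1 vertices together with an isolated last vertex. -/
def cycleK1Adj (n : ℕ) : Matrix (Fin n) (Fin n) ℝ :=
  fun i j =>
    if (i : ℕ) < n - 1 ∧ (j : ℕ) < n - 1 ∧ (j : ℕ) = ((i : ℕ) + 1) % (n - 1) then 1 else 0

/-!
The Laplacian of the directed path is a forward difference operator and its transpose a backward
one. For `2nθ ∈ πℤ`, the cosines `cos ((2j + 1)θ)` satisfy the Neumann and the sines
`sin (2(j + 1)θ)` the Dirichlet boundary condition, so the sum-to-product formulas make them right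
and left singular vectors for `2 sin θ`. The angles `θ = πk/(2n)`, `0 ≤ k < n`, give `n` distinct
singular values, hence all of them, and their sum is an instance of the summation formula for
sines in arithmetic progression.
-/

section SingularTriple

variable {m n : Type*} [Fintype m] [Fintype n]

/-- `σ` is a singular value of `M` with left and right singular vectors `u` and `v`. The vectors are
not normalised and only `v` is required to be nonzero, so that `u = 0` is allowed when `σ = 0`. -/
structure IsSingularTriple (M : Matrix m n ℝ) (σ : ℝ) (u : m → ℝ) (v : n → ℝ) : Prop where
  ne_zero : v ≠ 0
  mulVec_eq : M *ᵥ v = σ • u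
  transpose_mulVec_eq : Mᵀ *ᵥ u = σ • v

theorem IsSingularTriple.isRoot_charpoly_transpose_mul_self [DecidableEq n] {M : Matrix m n ℝ}
    {σ : ℝ} {u : m → ℝ} {v : n → ℝ} (h : IsSingularTriple M σ u v) :
    (Mᵀ * M).charpoly.IsRoot (σ ^ 2) := by
  have gram_mulVec : (Mᵀ * M) *ᵥ v = σ ^ 2 • v := by
    rw [← mulVec_mulVec, h.mulVec_eq, mulVec_smul, h.transpose_mulVec_eq, smul_smul, sq]
  have hasEigenvector : Module.End.HasEigenvector (toLin' (Mᵀ * M)) (σ ^ 2) v :=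
    ⟨Module.End.mem_eigenspace_iff.mpr gram_mulVec, h.ne_zero⟩
  rw [← charpoly_toLin', ← Module.End.hasEigenvalue_iff_isRoot_charpoly]
  exact Module.End.hasEigenvalue_of_hasEigenvector hasEigenvector

variable [DecidableEq m]

theorem singularValues_eq_of_isSingularTriple {ι : Type*} {s : Finset ι} {M : Matrix m m ℝ}
    {σ : ι → ℝ} (hcard : Fintype.card m ≤ s.card)
    (hnonneg : ∀ i ∈ s, 0 ≤ σ i) (hinj : Set.InjOn σ s)
    (htriple : ∀ i ∈ s, ∃ u v, IsSingularTriple M (σ i) u v) :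
    singularValues M = s.val.map σ := by
  have sq_injOn : Set.InjOn (fun i => σ i ^ 2) s := fun i hi j hj hij =>
    hinj hi hj ((sq_eq_sq₀ (hnonneg i hi) (hnonneg j hj)).mp hij)
  have roots_eq : (M * Mᵀ).charpoly.roots = (s.image fun i => σ i ^ 2).val := by
    rw [charpoly_mul_comm]
    apply Polynomial.roots_eq_of_natDegree_le_card_of_ne_zero
    · refine Finset.forall_mem_image.mpr fun i hi => ?_
      obtain ⟨u, v, huv⟩ := htriple i hi
      exact huv.isRoot_charpoly_transpose_mul_self
    · rwa [charpoly_natDegree_eq_dim, Finset.card_image_of_injOn sq_injOn]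
    · exact (charpoly_monic _).ne_zero
  rw [singularValues, roots_eq, Finset.image_val_of_injOn sq_injOn, Multiset.map_map]
  exact Multiset.map_congr rfl fun i hi => Real.sqrt_sq (hnonneg i hi)

end SingularTriple

section PathLaplacian

variable {n : ℕ}

/-- The Laplacian matrix of the directed path on `n` vertices. -/
noncomputable def pathLaplacian (n : ℕ) : Matrix (Fin n) (Fin n) ℝ :=
  outDeg (pathAdj n) - pathAdj n

theorem sum_pathAdj_mul (f : ℕ → ℝ) (i : Fin n) :
    ∑ j, pathAdj n i j * f j = if (i : ℕ) + 1 < n then f (i + 1) else 0 := by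
  simp only [pathAdj]
  rw [Fin.sum_univ_eq_sum_range (fun j => (if j = (i : ℕ) + 1 then 1 else 0) * f j) n]
  simp

theorem sum_pathAdj_mul_succ {g : ℕ → ℝ} (hg : g 0 = 0) (i : Fin n) :
    ∑ j, pathAdj n j i * g (j + 1) = g i := by
  simp only [pathAdj]
  rw [Fin.sum_univ_eq_sum_range (fun j => (if (i : ℕ) = j + 1 then 1 else 0) * g (j + 1)) n]
  obtain ⟨_ | k, hk⟩ := i
  · simp [hg]
  · simp [Nat.lt_of_succ_lt hk]

theorem sum_pathAdj (i : Fin n) :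
    ∑ j, pathAdj n i j = if (i : ℕ) + 1 < n then 1 else 0 := by
  simpa using sum_pathAdj_mul (fun _ => 1) i

theorem pathLaplacian_mulVec {f : ℕ → ℝ} (hf : f (n - 1) = f n) :
    pathLaplacian n *ᵥ (fun j => f j) = fun i : Fin n => f i - f (i + 1) := by
  funext i
  have adj_mulVec : (pathAdj n *ᵥ fun j => f j) i = _ := sum_pathAdj_mul f i
  rw [pathLaplacian, sub_mulVec, Pi.sub_apply, adj_mulVec, outDeg, mulVec_diagonal, sum_pathAdj]
  split_ifs with hi
  · rw [one_mul]
  · have hin : (i : ℕ) + 1 = n := by lia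
    rw [← hin, Nat.add_sub_cancel] at hf
    rw [zero_mul, sub_zero, hf, sub_self]

theorem pathLaplacian_transpose_mulVec {g : ℕ → ℝ} (hg₀ : g 0 = 0) (hgn : g n = 0) :
    (pathLaplacian n)ᵀ *ᵥ (fun j => g (j + 1)) = fun i : Fin n => g (i + 1) - g i := by
  funext i
  have adj_mulVec : ((pathAdj n)ᵀ *ᵥ fun j => g (j + 1)) i = g i := sum_pathAdj_mul_succ hg₀ i
  rw [pathLaplacian, transpose_sub, sub_mulVec, Pi.sub_apply, adj_mulVec, outDeg,
    diagonal_transpose, mulVec_diagonal, sum_pathAdj]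
  split_ifs with hi
  · rw [one_mul]
  · have hin : (i : ℕ) + 1 = n := by lia
    rw [hin, hgn, mul_zero]

theorem isSingularTriple_pathLaplacian {θ : ℝ} (hn : n ≠ 0) (hsin : Real.sin (2 * n * θ) = 0)
    (hcos : Real.cos θ ≠ 0) :
    IsSingularTriple (pathLaplacian n) (2 * Real.sin θ)
      (fun j => Real.sin (2 * (j + 1 : ℕ) * θ)) (fun j => Real.cos ((2 * j + 1) * θ)) := by
  have cos_sub_cos (j : ℕ) : Real.cos ((2 * j + 1) * θ) - Real.cos ((2 * (j + 1 : ℕ) + 1) * θ)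
      = 2 * Real.sin θ * Real.sin (2 * (j + 1 : ℕ) * θ) := by
    rw [mul_right_comm, Real.two_mul_sin_mul_sin]
    push_cast
    ring_nf
  have sin_sub_sin (j : ℕ) : Real.sin (2 * (j + 1 : ℕ) * θ) - Real.sin (2 * j * θ)
      = 2 * Real.sin θ * Real.cos ((2 * j + 1) * θ) := by
    rw [Real.sin_sub_sin]
    push_cast
    ring_nf
  refine ⟨fun hv => hcos ?_, ?_, ?_⟩
  · simpa using congrFun hv ⟨0, Nat.pos_of_ne_zero hn⟩
  · have neumann : Real.cos ((2 * (n - 1 : ℕ) + 1) * θ) = Real.cos ((2 * n + 1) * θ) := by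
      have h := cos_sub_cos (n - 1)
      rwa [Nat.sub_add_cancel (Nat.pos_of_ne_zero hn), hsin, mul_zero, sub_eq_zero] at h
    rw [pathLaplacian_mulVec (f := fun j => Real.cos ((2 * j + 1) * θ)) neumann]
    exact funext fun i => cos_sub_cos i
  · rw [pathLaplacian_transpose_mulVec (g := fun j => Real.sin (2 * j * θ)) (by simp) hsin]
    exact funext fun i => sin_sub_sin i

end PathLaplacian

section Angles

variable {n k : ℕ}

theorem pi_mul_div_two_mul_mem_Ico (hk : k < n) :
    Real.pi * k / (2 * n) ∈ Set.Ico 0 (Real.pi / 2) := by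
  have hkn : (k : ℝ) < n := mod_cast hk
  have hn : (0 : ℝ) < n := mod_cast Nat.zero_lt_of_lt hk
  refine ⟨by positivity, ?_⟩
  rw [div_lt_div_iff₀ (by positivity) two_pos]
  nlinarith [Real.pi_pos]

theorem two_mul_sin_pi_mul_div_nonneg (hk : k < n) :
    0 ≤ 2 * Real.sin (Real.pi * k / (2 * n)) := by
  obtain ⟨hnonneg, hlt⟩ := pi_mul_div_two_mul_mem_Ico hk
  have := Real.sin_nonneg_of_nonneg_of_le_pi hnonneg (by linarith [Real.pi_pos])
  positivity

theorem strictMonoOn_two_mul_sin_pi_mul_div (n : ℕ) :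
    StrictMonoOn (fun k : ℕ => 2 * Real.sin (Real.pi * k / (2 * n))) (Set.Iio n) := by
  intro j hj k hk hjk
  have mem_Icc {i : ℕ} (hi : i < n) :
      Real.pi * i / (2 * n) ∈ Set.Icc (-(Real.pi / 2)) (Real.pi / 2) := by
    obtain ⟨hnonneg, hlt⟩ := pi_mul_div_two_mul_mem_Ico hi
    exact ⟨by linarith [Real.pi_pos], hlt.le⟩
  have hn : (0 : ℝ) < n := mod_cast Nat.zero_lt_of_lt hk
  have angle_lt : Real.pi * j / (2 * n) < Real.pi * k / (2 * n) := by gcongr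
  exact mul_lt_mul_of_pos_left (Real.strictMonoOn_sin (mem_Icc hj) (mem_Icc hk) angle_lt) two_pos

theorem sum_two_mul_sin_pi_mul_div (hn : n ≠ 0) :
    ∑ j ∈ Finset.range n, 2 * Real.sin (Real.pi * j / (2 * n))
      = Real.cot (Real.pi / (4 * n)) - 1 := by
  set β := Real.pi / (4 * n) with hβ
  have hn₁ : (1 : ℝ) ≤ n := mod_cast Nat.one_le_iff_ne_zero.mpr hn
  have sin_pos : 0 < Real.sin β := by
    refine Real.sin_pos_of_pos_of_lt_pi (by positivity) (div_lt_self Real.pi_pos ?_)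
    linarith
  have sin_mul_sum : Real.sin β * ∑ j ∈ Finset.range n, Real.sin (Real.pi * j / (2 * n))
      = Real.sin (Real.pi / 4) * Real.sin (Real.pi / 4 - β) := by
    have mul_angle : n * β = Real.pi / 4 := by rw [hβ]; field
    have angle_eq (j : ℕ) : Real.pi * j / (2 * n) = 2 * β * j + 0 := by rw [hβ]; field
    simp only [angle_eq]
    convert Real.sin_mul_sum_sin n (2 * β) 0 using 3 <;> linarith
  have product_to_sum : 2 * Real.sin (Real.pi / 4) * Real.sin (Real.pi / 4 - β)
      = Real.cos β - Real.sin β := by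
    rw [Real.two_mul_sin_mul_sin, sub_sub_cancel, ← Real.cos_pi_div_two_sub β]
    ring_nf
  rw [← Finset.mul_sum, Real.cot_eq_cos_div_sin, eq_sub_iff_add_eq, eq_div_iff sin_pos.ne']
  linarith

end Angles

theorem singularValues_pathLaplacian (n : ℕ) :
    singularValues (pathLaplacian n)
      = (Finset.range n).val.map fun k : ℕ => 2 * Real.sin (Real.pi * k / (2 * n)) := by
  refine singularValues_eq_of_isSingularTriple (by simp)
    (fun k hk => two_mul_sin_pi_mul_div_nonneg (Finset.mem_range.mp hk))
    (by simpa using (strictMonoOn_two_mul_sin_pi_mul_div n).injOn) fun k hk => ?_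
  have hkn := Finset.mem_range.mp hk
  have hn : n ≠ 0 := Nat.ne_zero_of_lt hkn
  obtain ⟨hnonneg, hlt⟩ := pi_mul_div_two_mul_mem_Ico hkn
  refine ⟨_, _, isSingularTriple_pathLaplacian hn ?_ ?_⟩
  · rw [show 2 * n * (Real.pi * k / (2 * n)) = k * Real.pi by field, Real.sin_nat_mul_pi]
  · exact (Real.cos_pos_of_mem_Ioo ⟨by linarith [Real.pi_pos], hlt⟩).ne'

theorem path_laplacian_trace_norm (n : ℕ) (hn : 2 ≤ n) :
    traceNorm (outDeg (pathAdj n) - pathAdj n)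
      = ∑ j ∈ Finset.range n, 2 * Real.sin (Real.pi * j / (2 * n)) ∧
    traceNorm (outDeg (pathAdj n) - pathAdj n) = Real.cot (Real.pi / (4 * n)) - 1 := by
  have htrace : traceNorm (outDeg (pathAdj n) - pathAdj n)
      = ∑ j ∈ Finset.range n, 2 * Real.sin (Real.pi * j / (2 * n)) :=
    congrArg Multiset.sum (singularValues_pathLaplacian n)
  exact ⟨htrace, htrace.trans (sum_two_mul_sin_pi_mul_div (by lia))⟩
end

section
/- For every n ≥ 2, the difference ‖L(C⃗_n)‖_* − ‖L(P⃗_n)‖_* = 1 − tan(π/(4n)) is strictly positive, the sequence n ↦ 1 − tan(π/(4n)) is strictly increasing in n, and it converges to 1 as n → ∞; in particular ‖L(C⃗_n)‖_* > ‖L(P⃗_n)‖_* for all n ≥ 2. -/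
open Matrix

/-!
Both norms are sums of sines. The cyclic shift is diagonalised by the Vandermonde matrix of the
`n`-th roots of unity `ω`, on which `(1 - A) (1 - A)ᵀ` has eigenvalue
`2 - ω - ω⁻¹ = (2 sin (k π / n))²`. The path Laplacian is a difference operator exchanging, up to
the factor `2 sin x`, the cosine vector `cos ((2 i + 1) x)` and the sine vector
`sin (2 (i + 1) x)`, the boundary condition being `sin (2 n x) = 0`; so its singular values are
`2 sin (k π / (2 n))`.
Summing gives `2 cot (π / (2 n))` and `cot (π / (4 n)) - 1`, and `2 cot (2 x) = cot x - tan x`.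
-/

section Charpoly

open Polynomial

variable {m : Type*} [Fintype m] [DecidableEq m]

theorem charpoly_eq_prod_of_mul_map_eq_diagonal_mul {R S : Type*} [CommRing R] [CommRing S]
    {f : R →+* S} (hf : Function.Injective f) {M : Matrix m m R} {V : Matrix m m S} {d : m → R}
    (hV : IsUnit V) (h : V * M.map f = diagonal (f ∘ d) * V) :
    M.charpoly = ∏ i, (X - C (d i)) := by
  obtain ⟨U, rfl⟩ := hV
  have hconj : M.map f = U⁻¹.val * diagonal (f ∘ d) * U.val := by
    rw [mul_assoc, ← h, Units.inv_mul_cancel_left]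
  apply map_injective f hf
  rw [← charpoly_map, hconj, coe_units_inv, charpoly_units_conj', charpoly_diagonal,
    Polynomial.map_prod]
  simp only [Polynomial.map_sub, map_X, map_C, Function.comp_apply]

theorem charpoly_eq_prod_of_injective_eigenvalues {K : Type*} [Field K] {M : Matrix m m K}
    {d : m → K} (hd : Function.Injective d) (hM : ∀ i, Module.End.HasEigenvalue M.toLin' (d i)) :
    M.charpoly = ∏ i, (X - C (d i)) := by
  have hdvd : ∏ i, (X - C (d i)) ∣ M.charpoly := by
    refine Finset.prod_dvd_of_coprime
      (fun i _ j _ hij => pairwise_coprime_X_sub_C hd hij) fun i _ => ?_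
    rw [dvd_iff_isRoot, ← charpoly_toLin', ← Module.End.hasEigenvalue_iff_isRoot_charpoly]
    exact hM i
  refine eq_of_monic_of_dvd_of_natDegree_le (monic_prod_X_sub_C _ _) M.charpoly_monic hdvd ?_
  rw [charpoly_natDegree_eq_dim, natDegree_finsetProd_X_sub_C_eq_card, Finset.card_univ]

theorem traceNorm_eq_sum_of_charpoly_eq_prod {ι : Type*} [Fintype ι] {M : Matrix m m ℝ}
    {σ : ι → ℝ} (hσ : ∀ i, 0 ≤ σ i) (h : (M * Mᵀ).charpoly = ∏ i, (X - C (σ i ^ 2))) :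
    traceNorm M = ∑ i, σ i := by
  have hroots : (M * Mᵀ).charpoly.roots = Finset.univ.val.map fun i => σ i ^ 2 := by
    rw [h, ← roots_multiset_prod_X_sub_C (Finset.univ.val.map _), Multiset.map_map]
    rfl
  rw [traceNorm, singularValues, hroots, Multiset.map_map]
  exact Finset.sum_congr rfl fun i _ => Real.sqrt_sq (hσ i)

theorem traceNorm_eq_sum_of_singular_vectors {M : Matrix m m ℝ} {σ : m → ℝ}
    (hσ : ∀ k, 0 ≤ σ k) (hinj : Function.Injective σ) {u w : m → m → ℝ} (hu : ∀ k, u k ≠ 0)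
    (hMu : ∀ k, M *ᵥ u k = σ k • w k) (hMw : ∀ k, Mᵀ *ᵥ w k = σ k • u k) :
    traceNorm M = ∑ k, σ k := by
  have heigen (k : m) : Module.End.HasEigenvalue (Mᵀ * M).toLin' (σ k ^ 2) := by
    refine Module.End.hasEigenvalue_of_hasEigenvector (x := u k)
      ⟨Module.End.mem_eigenspace_iff.mpr ?_, hu k⟩
    rw [toLin'_apply, ← mulVec_mulVec, hMu, mulVec_smul, hMw, smul_smul, sq]
  have hinj_sq : Function.Injective fun k => σ k ^ 2 := fun i j hij =>
    hinj ((pow_left_inj₀ (hσ i) (hσ j) two_ne_zero).mp hij)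
  refine traceNorm_eq_sum_of_charpoly_eq_prod hσ ?_
  rw [charpoly_mul_comm, charpoly_eq_prod_of_injective_eigenvalues hinj_sq heigen]

end Charpoly

section Trigonometry

open Real

theorem sum_range_two_mul_sin_mul_two_mul {x : ℝ} (hx : sin x ≠ 0) (n : ℕ) :
    ∑ k ∈ Finset.range n, 2 * sin (k * (2 * x)) = (cos x - cos ((2 * n - 1) * x)) / sin x := by
  have hterm (k : ℕ) : 2 * sin (k * (2 * x)) * sin x
      = cos ((2 * k - 1) * x) - cos ((2 * (k + 1 : ℕ) - 1) * x) := by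
    rw [two_mul_sin_mul_sin]
    push_cast
    ring_nf
  rw [eq_div_iff hx, Finset.sum_mul, Finset.sum_congr rfl fun k _ => hterm k,
    Finset.sum_range_sub' fun k : ℕ => cos ((2 * k - 1) * x)]
  simp

theorem sin_pi_div_pos {a : ℝ} (ha : 1 < a) : 0 < sin (π / a) :=
  sin_pos_of_pos_of_lt_pi (div_pos pi_pos (by linarith)) (div_lt_self pi_pos ha)

theorem two_sub_exp_sub_exp_inv (z : ℂ) :
    2 - Complex.exp (2 * z * Complex.I) - (Complex.exp (2 * z * Complex.I))⁻¹
      = (2 * Complex.sin z) ^ 2 := by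
  have hsq : Complex.exp (2 * z * Complex.I) = Complex.exp (z * Complex.I) ^ 2 := by
    rw [← Complex.exp_nat_mul]
    ring_nf
  have hne : Complex.exp (z * Complex.I) ≠ 0 := Complex.exp_ne_zero _
  rw [hsq, Complex.sin, neg_mul, Complex.exp_neg, mul_div_cancel₀ _ two_ne_zero, mul_pow,
    Complex.I_sq]
  field_simp
  ring

-- No side condition: where `sin x` or `cos x` vanishes, both sides are `0` because `y / 0 = 0`.
theorem two_mul_cot_two_mul (x : ℝ) : 2 * cot (2 * x) = cot x - tan x := by
  rw [cot_eq_cos_div_sin, cot_eq_cos_div_sin, tan_eq_sin_div_cos, sin_two_mul, cos_two_mul']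
  rcases eq_or_ne (sin x) 0 with hs | hs
  · simp [hs]
  rcases eq_or_ne (cos x) 0 with hc | hc
  · simp [hc]
  field_simp

theorem sum_range_two_mul_sin_mul_pi_div {n : ℕ} (hn : n ≠ 0) :
    ∑ k ∈ Finset.range n, 2 * sin (k * (π / n)) = 2 * cot (π / (2 * n)) := by
  have hn_one : (1 : ℝ) ≤ n := by exact_mod_cast Nat.one_le_iff_ne_zero.mpr hn
  have hsin : sin (π / (2 * n)) ≠ 0 := (sin_pi_div_pos (by linarith)).ne'
  have hangle : π / n = 2 * (π / (2 * n)) := by ring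
  have hlast : (2 * n - 1) * (π / (2 * n)) = π - π / (2 * n) := by field_simp
  rw [hangle, sum_range_two_mul_sin_mul_two_mul hsin, hlast, cos_pi_sub, cot_eq_cos_div_sin]
  ring

theorem sum_range_two_mul_sin_mul_pi_div_two_mul {n : ℕ} (hn : n ≠ 0) :
    ∑ k ∈ Finset.range n, 2 * sin (k * (π / (2 * n))) = cot (π / (4 * n)) - 1 := by
  have hn_one : (1 : ℝ) ≤ n := by exact_mod_cast Nat.one_le_iff_ne_zero.mpr hn
  have hsin : sin (π / (4 * n)) ≠ 0 := (sin_pi_div_pos (by linarith)).ne'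
  have hangle : π / (2 * n) = 2 * (π / (4 * n)) := by ring
  have hlast : (2 * n - 1) * (π / (4 * n)) = π / 2 - π / (4 * n) := by field_simp; ring
  rw [hangle, sum_range_two_mul_sin_mul_two_mul hsin, hlast, cos_pi_div_two_sub,
    cot_eq_cos_div_sin, div_sub_one hsin]

theorem tan_pi_div_four_mul_strictAntiOn :
    StrictAntiOn (fun n : ℕ => tan (π / (4 * n))) (Set.Ici 1) := by
  intro m hm n _ hmn
  have hm' : (1 : ℝ) ≤ m := by exact_mod_cast hm
  have hmn' : (m : ℝ) < n := by exact_mod_cast hmn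
  refine tan_lt_tan_of_lt_of_lt_pi_div_two ?_ ?_ ?_
  · exact (neg_lt_zero.mpr pi_div_two_pos).trans_le (by positivity)
  · gcongr
    linarith
  · gcongr

theorem tan_pi_div_four_mul_lt_one {n : ℕ} (hn : 1 < n) : tan (π / (4 * n)) < 1 := by
  simpa using tan_pi_div_four_mul_strictAntiOn Set.self_mem_Ici hn.le hn

theorem tendsto_tan_pi_div_four_mul :
    Filter.Tendsto (fun n : ℕ => tan (π / (4 * n))) Filter.atTop (nhds 0) := by
  have hangle : Filter.Tendsto (fun n : ℕ => π / (4 * (n : ℝ))) Filter.atTop (nhds 0) :=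
    (tendsto_natCast_atTop_atTop.const_mul_atTop four_pos).const_div_atTop π
  have htan : Filter.Tendsto tan (nhds 0) (nhds 0) := by
    simpa using (continuousAt_tan.mpr (by simp : cos 0 ≠ 0)).tendsto
  exact htan.comp hangle

end Trigonometry

section Cycle

theorem cycleAdj_eq_permMatrix_finRotate (n : ℕ) :
    cycleAdj n = (finRotate n).permMatrix ℝ := by
  rcases n with _ | n
  · exact Subsingleton.elim _ _
  ext i j
  simp [cycleAdj, Equiv.Perm.permMatrix, PEquiv.toMatrix_apply, Fin.ext_iff, Fin.val_add, eq_comm]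

theorem one_sub_permMatrix_mul_transpose {m R : Type*} [Fintype m] [DecidableEq m] [Ring R]
    (σ : Equiv.Perm m) :
    (1 - σ.permMatrix R) * (1 - σ.permMatrix R)ᵀ
      = 2 - σ.permMatrix R - σ⁻¹.permMatrix R := by
  have hinv : σ.permMatrix R * σ⁻¹.permMatrix R = 1 := by
    rw [← permMatrix_mul, inv_mul_cancel, permMatrix_one]
  rw [transpose_sub, transpose_one, transpose_permMatrix, mul_sub, sub_mul, sub_mul, hinv]
  simp only [mul_one, one_mul]
  rw [← one_add_one_eq_two]
  abel

theorem vandermonde_mul_permMatrix_finRotate_inv {R : Type*} [CommRing R] {n : ℕ} {w : Fin n → R}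
    (hw : ∀ k, w k ^ n = 1) :
    vandermonde w * (finRotate n)⁻¹.permMatrix R = diagonal w * vandermonde w := by
  rcases n with _ | n
  · exact Subsingleton.elim _ _
  ext k i
  rw [Equiv.Perm.permMatrix, PEquiv.mul_toMatrix_toPEquiv, submatrix_apply, diagonal_mul,
    vandermonde_apply, vandermonde_apply, ← pow_succ', pow_eq_pow_mod ((i : ℕ) + 1) (hw k)]
  simp [Equiv.Perm.inv_def, Fin.val_add]

theorem vandermonde_mul_permMatrix_finRotate {K : Type*} [Field K] {n : ℕ} {w : Fin n → K}
    (hw : ∀ k, w k ^ n = 1) :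
    vandermonde w * (finRotate n).permMatrix K = diagonal w⁻¹ * vandermonde w := by
  have hw_ne_zero (k : Fin n) : w k ≠ 0 := fun hk => by
    simpa [hk, zero_pow (Fin.pos k).ne'] using hw k
  have hdiag : diagonal w⁻¹ * diagonal w = 1 := by
    rw [diagonal_mul_diagonal, ← diagonal_one]
    exact congrArg diagonal (funext fun k => inv_mul_cancel₀ (hw_ne_zero k))
  calc vandermonde w * (finRotate n).permMatrix K
      = diagonal w⁻¹ * (diagonal w * vandermonde w) * (finRotate n).permMatrix K := by
        rw [← mul_assoc, hdiag, one_mul]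
    _ = diagonal w⁻¹ * vandermonde w := by
        rw [← vandermonde_mul_permMatrix_finRotate_inv hw, mul_assoc, mul_assoc, ← permMatrix_mul,
          mul_inv_cancel, permMatrix_one, mul_one]

theorem vandermonde_mul_one_sub_permMatrix_finRotate_mul_transpose {K : Type*} [Field K] {n : ℕ}
    {w : Fin n → K} (hw : ∀ k, w k ^ n = 1) :
    vandermonde w
        * ((1 - (finRotate n).permMatrix K) * (1 - (finRotate n).permMatrix K)ᵀ)
      = diagonal (fun k => 2 - w k - (w k)⁻¹) * vandermonde w := by
  rw [one_sub_permMatrix_mul_transpose, mul_sub, mul_sub, vandermonde_mul_permMatrix_finRotate hw,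
    vandermonde_mul_permMatrix_finRotate_inv hw, mul_two]
  ext k i
  simp only [Matrix.sub_apply, Matrix.add_apply, diagonal_mul, Pi.inv_apply]
  ring

theorem one_sub_cycleAdj_mul_transpose_map_ofReal (n : ℕ) :
    ((1 - cycleAdj n) * (1 - cycleAdj n)ᵀ).map Complex.ofRealHom
      = (1 - (finRotate n).permMatrix ℂ) * (1 - (finRotate n).permMatrix ℂ)ᵀ := by
  have hmap : (1 - cycleAdj n).map Complex.ofRealHom = 1 - (finRotate n).permMatrix ℂ := by
    ext i j
    simp [cycleAdj_eq_permMatrix_finRotate, PEquiv.toMatrix_apply, one_apply,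
      apply_ite Complex.ofReal]
  rw [Matrix.map_mul, transpose_map, hmap]

theorem charpoly_one_sub_cycleAdj_mul_transpose {n : ℕ} (hn : n ≠ 0) :
    ((1 - cycleAdj n) * (1 - cycleAdj n)ᵀ).charpoly
      = ∏ k : Fin n, (Polynomial.X - Polynomial.C ((2 * Real.sin (k * (Real.pi / n))) ^ 2)) := by
  set ζ : ℂ := Complex.exp (2 * Real.pi * Complex.I / n) with hζ_def
  have hζ : IsPrimitiveRoot ζ n := Complex.isPrimitiveRoot_exp n hn
  have hpow (k : Fin n) : (ζ ^ (k : ℕ)) ^ n = 1 := by rw [pow_right_comm, hζ.pow_eq_one, one_pow]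
  have hunit : IsUnit (vandermonde fun k : Fin n => ζ ^ (k : ℕ)) := by
    rw [isUnit_iff_isUnit_det, isUnit_iff_ne_zero, det_vandermonde_ne_zero_iff]
    exact fun a b hab => Fin.ext (hζ.pow_inj a.isLt b.isLt hab)
  have heigenvalue (k : Fin n) : 2 - ζ ^ (k : ℕ) - (ζ ^ (k : ℕ))⁻¹
      = Complex.ofRealHom ((2 * Real.sin (k * (Real.pi / n))) ^ 2) := by
    have hexp : ζ ^ (k : ℕ) = Complex.exp (2 * (k * (Real.pi / n)) * Complex.I) := by
      rw [hζ_def, ← Complex.exp_nat_mul]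
      ring_nf
    rw [hexp, two_sub_exp_sub_exp_inv]
    simp
  refine charpoly_eq_prod_of_mul_map_eq_diagonal_mul Complex.ofRealHom.injective hunit ?_
  rw [one_sub_cycleAdj_mul_transpose_map_ofReal,
    vandermonde_mul_one_sub_permMatrix_finRotate_mul_transpose hpow]
  exact congrArg (diagonal · * _) (funext heigenvalue)

theorem traceNorm_one_sub_cycleAdj {n : ℕ} (hn : n ≠ 0) :
    traceNorm (1 - cycleAdj n) = 2 * Real.cot (Real.pi / (2 * n)) := by
  have hnonneg (k : Fin n) : 0 ≤ 2 * Real.sin (k * (Real.pi / n)) := by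
    have hk : (k : ℝ) ≤ n := by exact_mod_cast k.isLt.le
    have hangle : k * (Real.pi / n) ≤ Real.pi := by
      rw [mul_div_left_comm]
      exact mul_le_of_le_one_right Real.pi_nonneg (div_le_one_of_le₀ hk n.cast_nonneg)
    exact mul_nonneg two_pos.le (Real.sin_nonneg_of_nonneg_of_le_pi (by positivity) hangle)
  rw [traceNorm_eq_sum_of_charpoly_eq_prod hnonneg (charpoly_one_sub_cycleAdj_mul_transpose hn),
    Fin.sum_univ_eq_sum_range fun k : ℕ => 2 * Real.sin (k * (Real.pi / n)),
    sum_range_two_mul_sin_mul_pi_div hn]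

end Cycle

section Path

open Real

variable {n : ℕ}

theorem pathAdj_mulVec (f : ℕ → ℝ) (i : Fin n) :
    (pathAdj n *ᵥ fun j => f j) i = if (i : ℕ) + 1 < n then f (i + 1) else 0 := by
  simp only [mulVec, dotProduct, pathAdj, ite_mul, one_mul, zero_mul]
  rw [Fin.sum_univ_eq_sum_range fun j => if j = (i : ℕ) + 1 then f j else 0]
  simp only [Finset.sum_ite_eq', Finset.mem_range]

theorem pathAdj_transpose_mulVec {f : ℕ → ℝ} (hf : f 0 = 0) (i : Fin n) :
    ((pathAdj n)ᵀ *ᵥ fun j => f (j + 1)) i = f i := by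
  simp only [mulVec, dotProduct, transpose_apply, pathAdj, ite_mul, one_mul, zero_mul]
  rw [Fin.sum_univ_eq_sum_range fun j => if (i : ℕ) = j + 1 then f (j + 1) else 0]
  obtain ⟨_ | i, hi⟩ := i
  · simp [hf]
  · simp [(Nat.lt_succ_self i).trans hi]

theorem outDeg_pathAdj :
    outDeg (pathAdj n) = diagonal fun i : Fin n => if (i : ℕ) + 1 < n then 1 else 0 := by
  rw [outDeg]
  congr 1 with i
  simpa [mulVec, dotProduct] using pathAdj_mulVec 1 i

theorem outDeg_sub_pathAdj_mulVec_cos {x : ℝ} (hx : sin (2 * n * x) = 0) :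
    (outDeg (pathAdj n) - pathAdj n) *ᵥ (fun i : Fin n => cos ((2 * i + 1) * x))
      = (2 * sin x) • fun i : Fin n => sin (2 * (i + 1) * x) := by
  ext i
  rw [sub_mulVec, Pi.sub_apply, outDeg_pathAdj, mulVec_diagonal,
    pathAdj_mulVec fun i => cos ((2 * i + 1) * x), Pi.smul_apply, smul_eq_mul]
  split_ifs with hi
  · rw [two_mul_sin_mul_sin, ← cos_neg (x - _)]
    push_cast
    ring_nf
  · have hi_last : (i : ℝ) + 1 = n := by exact_mod_cast (by lia : (i : ℕ) + 1 = n)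
    simp [hi_last, hx]

theorem outDeg_sub_pathAdj_transpose_mulVec_sin {x : ℝ} (hx : sin (2 * n * x) = 0) :
    (outDeg (pathAdj n) - pathAdj n)ᵀ *ᵥ (fun i : Fin n => sin (2 * (i + 1) * x))
      = (2 * sin x) • fun i : Fin n => cos ((2 * i + 1) * x) := by
  ext i
  have hdeg : (if (i : ℕ) + 1 < n then 1 else 0) * sin (2 * (i + 1) * x)
      = sin (2 * (i + 1) * x) := by
    split_ifs with hi
    · exact one_mul _
    · have hi_last : (i : ℝ) + 1 = n := by exact_mod_cast (by lia : (i : ℕ) + 1 = n)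
      rw [hi_last, hx, mul_zero]
  have hadj := pathAdj_transpose_mulVec (f := fun j => sin (2 * j * x)) (by simp) i
  push_cast at hadj
  rw [transpose_sub, sub_mulVec, Pi.sub_apply, outDeg_pathAdj, diagonal_transpose,
    mulVec_diagonal, hdeg, hadj, Pi.smul_apply, smul_eq_mul, two_mul_sin_mul_cos,
    ← neg_sub _ x, sin_neg]
  ring_nf

theorem natCast_mul_pi_div_two_mul_mem_Ico (k : Fin n) :
    k * (π / (2 * n)) ∈ Set.Ico 0 (π / 2) := by
  have hk : (k : ℝ) / n < 1 := by
    rw [div_lt_one (by exact_mod_cast Fin.pos k)]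
    exact_mod_cast k.isLt
  have hangle : k * (π / (2 * n)) = π / 2 * (k / n) := by ring
  exact ⟨by positivity, hangle ▸ mul_lt_of_lt_one_right pi_div_two_pos hk⟩

theorem injective_sin_natCast_mul_pi_div_two_mul :
    Function.Injective fun k : Fin n => sin (k * (π / (2 * n))) := by
  intro a b hab
  have hmem (k : Fin n) : k * (π / (2 * n)) ∈ Set.Icc (-(π / 2)) (π / 2) := by
    obtain ⟨hnonneg, hlt⟩ := natCast_mul_pi_div_two_mul_mem_Ico k
    exact ⟨by linarith [pi_pos], hlt.le⟩
  have hn : (0 : ℝ) < n := by exact_mod_cast Fin.pos a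
  have hangle_eq := injOn_sin (hmem a) (hmem b) hab
  exact Fin.ext (by exact_mod_cast mul_right_cancel₀ (by positivity) hangle_eq)

theorem traceNorm_outDeg_sub_pathAdj (hn : n ≠ 0) :
    traceNorm (outDeg (pathAdj n) - pathAdj n) = cot (π / (4 * n)) - 1 := by
  set x : Fin n → ℝ := fun k => k * (π / (2 * n)) with hx_def
  have hx_mem (k : Fin n) : x k ∈ Set.Ico 0 (π / 2) := natCast_mul_pi_div_two_mul_mem_Ico k
  have hnonneg (k : Fin n) : 0 ≤ 2 * sin (x k) := by
    have hle : x k ≤ π := by linarith [(hx_mem k).2, pi_pos]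
    exact mul_nonneg two_pos.le (sin_nonneg_of_nonneg_of_le_pi (hx_mem k).1 hle)
  have hinj : Function.Injective fun k => 2 * sin (x k) :=
    (mul_right_injective₀ two_ne_zero).comp injective_sin_natCast_mul_pi_div_two_mul
  have hboundary (k : Fin n) : sin (2 * n * x k) = 0 := by
    rw [← sin_nat_mul_pi k, hx_def]
    field_simp
  have hcos_ne_zero (k : Fin n) : (fun i : Fin n => cos ((2 * i + 1) * x k)) ≠ 0 := fun h => by
    have hcos := congrFun h ⟨0, Nat.pos_of_ne_zero hn⟩
    have hcos_pos := cos_pos_of_mem_Ioo ⟨by linarith [(hx_mem k).1, pi_pos], (hx_mem k).2⟩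
    simp [hcos_pos.ne'] at hcos
  rw [traceNorm_eq_sum_of_singular_vectors hnonneg hinj hcos_ne_zero
      (fun k => outDeg_sub_pathAdj_mulVec_cos (hboundary k))
      (fun k => outDeg_sub_pathAdj_transpose_mulVec_sin (hboundary k)),
    Fin.sum_univ_eq_sum_range fun k : ℕ => 2 * sin (k * (π / (2 * n))),
    sum_range_two_mul_sin_mul_pi_div_two_mul hn]

end Path

theorem traceNorm_cycle_sub_traceNorm_path {n : ℕ} (hn : n ≠ 0) :
    traceNorm (1 - cycleAdj n) - traceNorm (outDeg (pathAdj n) - pathAdj n)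
      = 1 - Real.tan (Real.pi / (4 * n)) := by
  have hangle : Real.pi / (2 * n) = 2 * (Real.pi / (4 * n)) := by ring
  rw [traceNorm_one_sub_cycleAdj hn, traceNorm_outDeg_sub_pathAdj hn, hangle, two_mul_cot_two_mul]
  ring

theorem cycle_path_laplacian_trace_norm_difference :
    (∀ n : ℕ, 2 ≤ n →
      traceNorm (1 - cycleAdj n) - traceNorm (outDeg (pathAdj n) - pathAdj n)
        = 1 - Real.tan (Real.pi / (4 * n)) ∧
      0 < 1 - Real.tan (Real.pi / (4 * n))) ∧
    (∀ m n : ℕ, 2 ≤ m → m < n →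
      1 - Real.tan (Real.pi / (4 * m)) < 1 - Real.tan (Real.pi / (4 * n))) ∧
    Filter.Tendsto (fun n : ℕ => 1 - Real.tan (Real.pi / (4 * n))) Filter.atTop (nhds 1) ∧
    (∀ n : ℕ, 2 ≤ n →
      traceNorm (outDeg (pathAdj n) - pathAdj n) < traceNorm (1 - cycleAdj n)) := by
  have hdiff (n : ℕ) (hn : 2 ≤ n) :=
    traceNorm_cycle_sub_traceNorm_path (n := n) (by lia)
  have hpos (n : ℕ) (hn : 2 ≤ n) : 0 < 1 - Real.tan (Real.pi / (4 * n)) :=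
    sub_pos.mpr (tan_pi_div_four_mul_lt_one hn)
  refine ⟨fun n hn => ⟨hdiff n hn, hpos n hn⟩, fun m n hm hmn => ?_, ?_, fun n hn => ?_⟩
  · have hm_one : 1 ≤ m := by lia
    exact sub_lt_sub_left (tan_pi_div_four_mul_strictAntiOn hm_one (hm_one.trans hmn.le) hmn) 1
  · simpa using tendsto_tan_pi_div_four_mul.const_sub 1
  · exact sub_pos.mp (hdiff n hn ▸ hpos n hn)
end
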